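/- arXiv:1003.0529 — 10 statements merged into one kernel-verified Lean document; each statement's English description precedes it below -/
import Mathlib

section
/- For every real ε with 0 ≤ ε ≤ 1/2 and every real x with 0 ≤ x ≤ 0.7, one has sin((1 + 2ε)·x) ≥ (1 + ε)·sin(x). -/
theorem sin_ge_of_small_angle (ε x : ℝ) (hε0 : 0 ≤ ε) (hε : ε ≤ 1/2)
    (hx0 : 0 ≤ x) (hx : x ≤ 0.7) :
    Real.sin ((1 + 2*ε) * x) ≥ (1 + ε) * Real.sin x := by
  norm_num at hx
  have hpi := Real.pi_gt_three
  have h := strictConcaveOn_sin_Icc.concaveOn.2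
    (show x ∈ Set.Icc 0 Real.pi from ⟨hx0, by linarith⟩)
    (show 2 * x ∈ Set.Icc 0 Real.pi from ⟨by linarith, by linarith⟩)
    (show 0 ≤ 1 - 2 * ε by linarith) (show 0 ≤ 2 * ε by linarith) (by ring)
  simp only [smul_eq_mul] at h
  rw [show (1 - 2 * ε) * x + 2 * ε * (2 * x) = (1 + 2 * ε) * x by ring,
    Real.sin_two_mul] at h
  have hc : 3 / 4 ≤ Real.cos x := by
    have := Real.one_sub_sq_div_two_le_cos (x := x)
    nlinarith
  have hs : 0 ≤ Real.sin x := Real.sin_nonneg_of_nonneg_of_le_pi hx0 (by linarith)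
  have := mul_nonneg (mul_nonneg hε0 hs) (sub_nonneg.2 hc)
  nlinarith
end

section
/- For every real ε with 0 ≤ ε ≤ 1/2, the function g_ε : ℝ → ℝ defined by g_ε(x) = (1 − ε)·sin(x) − sin((1 − 2ε)·x) is concave on the interval [0, 0.7]. -/
theorem concave_g_eps (ε : ℝ) (hε0 : 0 ≤ ε) (hε : ε ≤ 1/2) :
    ConcaveOn ℝ (Set.Icc (0:ℝ) 0.7)
      (fun x : ℝ => (1 - ε) * Real.sin x - Real.sin ((1 - 2*ε) * x)) := by
  have hlin : ∀ x : ℝ, HasDerivAt (fun x : ℝ => (1 - 2*ε) * x) (1 - 2*ε) x := fun x => by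
    simpa using (hasDerivAt_id x).const_mul (1 - 2*ε)
  have h1 : ∀ x : ℝ, HasDerivAt
      (fun x : ℝ => (1 - ε) * Real.sin x - Real.sin ((1 - 2*ε) * x))
      ((1 - ε) * Real.cos x - Real.cos ((1 - 2*ε) * x) * (1 - 2*ε)) x := fun x =>
    ((Real.hasDerivAt_sin x).const_mul (1 - ε)).sub (hlin x).sin
  have h2 : ∀ x : ℝ, HasDerivAt
      (fun x : ℝ => (1 - ε) * Real.cos x - Real.cos ((1 - 2*ε) * x) * (1 - 2*ε))
      ((1 - ε) * (-Real.sin x) - (-Real.sin ((1 - 2*ε) * x) * (1 - 2*ε)) * (1 - 2*ε)) x :=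
    fun x => ((Real.hasDerivAt_cos x).const_mul (1 - ε)).sub ((hlin x).cos.mul_const _)
  have hd := funext fun x => (h1 x).deriv
  apply concaveOn_of_deriv2_nonpos' (convex_Icc _ _)
  · exact fun x _ => (h1 x).differentiableAt.differentiableWithinAt
  · rw [hd]
    exact fun x _ => (h2 x).differentiableAt.differentiableWithinAt
  · intro x hx
    obtain ⟨hx0, hx1⟩ := hx
    simp only [Function.iterate_succ, Function.iterate_zero, Function.comp, id]
    rw [hd, (h2 x).deriv]
    have hpi := Real.pi_gt_three
    norm_num at hx1
    have hle : (1 - 2*ε) * x ≤ x := by nlinarith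
    have h0 : 0 ≤ (1 - 2*ε) * x := mul_nonneg (by linarith) hx0
    have hs : Real.sin ((1 - 2*ε) * x) ≤ Real.sin x :=
      Real.sin_le_sin_of_le_of_le_pi_div_two (by linarith) (by linarith) hle
    have hsx : 0 ≤ Real.sin x := Real.sin_nonneg_of_nonneg_of_le_pi hx0 (by linarith)
    have ha : (1 - 2*ε)^2 ≤ 1 - ε := by nlinarith
    have e1 := mul_le_mul_of_nonneg_left hs (sq_nonneg (1 - 2*ε))
    have e2 := mul_le_mul_of_nonneg_right ha hsx
    linarith
end

section
/- For every real ε with 0 ≤ ε ≤ 1/2, one has (1 − ε)·sin(0.7) − sin((1 − 2ε)·0.7) ≥ 0. -/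
theorem g_eps_boundary (ε : ℝ) (hε0 : 0 ≤ ε) (hε : ε ≤ 1/2) :
    (1 - ε) * Real.sin 0.7 - Real.sin ((1 - 2*ε) * 0.7) ≥ 0 := by
  rcases hε0.eq_or_lt with h | h
  · subst h; simp
  have e : (1 - 2*ε) * 0.7 = 0.7 - 1.4 * ε := by ring
  rw [e, Real.sin_sub]
  have hc : (0.755:ℝ) ≤ Real.cos 0.7 := by
    have := Real.one_sub_sq_div_two_le_cos (x := 0.7)
    norm_num at this ⊢
    linarith
  have hs : Real.sin 0.7 ≤ 0.7 := Real.sin_le (by norm_num)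
  have hs0 : 0 ≤ Real.sin 0.7 :=
    Real.sin_nonneg_of_nonneg_of_le_pi (by norm_num) (by linarith [Real.pi_gt_three])
  have ht : 1.2 * ε ≤ Real.sin (1.4 * ε) := by
    have h1 : 1.4 * ε - (1.4 * ε) ^ 3 / 6 < Real.sin (1.4 * ε) :=
      Real.sin_gt_sub_cube (by positivity)
    have h2 : ε ^ 2 ≤ 1 / 4 := by nlinarith
    have h3 : ε * ε ^ 2 ≤ ε * (1 / 4) := mul_le_mul_of_nonneg_left h2 hε0
    nlinarith
  have h1 : 0.755 * (1.2 * ε) ≤ Real.cos 0.7 * Real.sin (1.4 * ε) :=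
    mul_le_mul hc ht (by positivity) (by linarith)
  have h2 : Real.sin 0.7 * Real.cos (1.4 * ε) ≤ Real.sin 0.7 :=
    mul_le_of_le_one_right hs0 (Real.cos_le_one _)
  have h3 : ε * Real.sin 0.7 ≤ ε * 0.7 := mul_le_mul_of_nonneg_left hs hε0
  linarith
end

section
/- If a and b are nonzero vectors in a real inner product space, then (‖a‖ + ‖b‖)·sin(∠(a, b)/2) ≤ ‖a − b‖. -/
open InnerProductGeometry

theorem sum_norm_mul_sin_half_angle_le {E : Type*} [NormedAddCommGroup E]
    [InnerProductSpace ℝ E] (a b : E) (ha : a ≠ 0) (hb : b ≠ 0) :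
    (‖a‖ + ‖b‖) * Real.sin (angle a b / 2) ≤ ‖a - b‖ := by
  refine abs_le_of_sq_le_sq' ?_ (norm_nonneg _) |>.2
  have h := norm_sub_sq_eq_norm_sq_add_norm_sq_sub_two_mul_norm_mul_norm_mul_cos_angle a b
  have hc : Real.cos (angle a b) = 1 - 2 * Real.sin (angle a b / 2) ^ 2 := by
    have h1 := Real.cos_two_mul (angle a b / 2)
    have h2 := Real.sin_sq_add_cos_sq (angle a b / 2)
    rw [mul_div_cancel₀ _ (two_ne_zero)] at h1
    linarith
  rw [hc] at h
  have h3 : 0 ≤ (‖a‖ - ‖b‖) ^ 2 * (1 - Real.sin (angle a b / 2) ^ 2) :=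
    mul_nonneg (sq_nonneg _) (sub_nonneg.2 (Real.sin_sq_le_one _))
  nlinarith [h, h3]
end

section
/- Let ε be a real number with 0 < ε < 4. Let y, y' be unit vectors in a real inner product space and let a, b be nonzero vectors (in a possibly different real inner product space) with ‖a‖ ≥ 1 − ε/8, ‖b‖ ≥ 1 − ε/8, and ‖a − b‖ ≤ (1 + ε/8)·‖y − y'‖. Then sin(∠(a, b)/2) ≤ (1 + ε/2)·sin(∠(y, y')/2). -/
open InnerProductGeometry

theorem norm_sub_sq_half_angle {F : Type*} [NormedAddCommGroup F] [InnerProductSpace ℝ F] (a b : F) :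
    ‖a - b‖^2 = (‖a‖ - ‖b‖)^2 + 4 * (‖a‖ * ‖b‖) * Real.sin (angle a b / 2)^2 := by
  have h1 := norm_sub_sq_real a b
  have h2 := cos_angle_mul_norm_mul_norm a b
  have h3 : Real.cos (angle a b) = 1 - 2 * Real.sin (angle a b / 2)^2 := by
    have h4 := Real.cos_two_mul (angle a b / 2)
    have h5 := Real.sin_sq_add_cos_sq (angle a b / 2)
    rw [mul_div_cancel₀ _ (two_ne_zero)] at h4
    linarith
  rw [h1, ← h2, h3]
  ring

theorem sin_half_angle_nonneg {F : Type*} [NormedAddCommGroup F] [InnerProductSpace ℝ F] (a b : F) :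
    0 ≤ Real.sin (angle a b / 2) := by
  have h1 := angle_nonneg a b
  have h2 := angle_le_pi a b
  apply Real.sin_nonneg_of_nonneg_of_le_pi <;> linarith

theorem sin_half_angle_upper_bound
    {E F : Type*} [NormedAddCommGroup E] [InnerProductSpace ℝ E]
    [NormedAddCommGroup F] [InnerProductSpace ℝ F]
    (ε : ℝ) (hε0 : 0 < ε) (hε4 : ε < 4)
    (y y' : E) (hy : ‖y‖ = 1) (hy' : ‖y'‖ = 1)
    (a b : F) (ha : a ≠ 0) (hb : b ≠ 0)
    (hna : 1 - ε/8 ≤ ‖a‖) (hnb : 1 - ε/8 ≤ ‖b‖)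
    (hab : ‖a - b‖ ≤ (1 + ε/8) * ‖y - y'‖) :
    Real.sin (angle a b / 2) ≤ (1 + ε/2) * Real.sin (angle y y' / 2) := by
  have hs := sin_half_angle_nonneg a b
  have ht := sin_half_angle_nonneg y y'
  have h1 := norm_sub_sq_half_angle a b
  have h2 := norm_sub_sq_half_angle y y'
  rw [hy, hy'] at h2
  set s := Real.sin (angle a b / 2)
  set t := Real.sin (angle y y' / 2)
  have hm : 0 < 1 - ε/8 := by linarith
  have h3 : ‖y - y'‖ = 2 * t := by
    rw [← sq_eq_sq₀ (norm_nonneg _) (by positivity), h2]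
    ring
  have h4 : 2 * (1 - ε/8) * s ≤ ‖a - b‖ := by
    refine (abs_le_of_sq_le_sq' ?_ (norm_nonneg _)).2
    have h5 : (1 - ε/8) * (1 - ε/8) ≤ ‖a‖ * ‖b‖ :=
      mul_le_mul hna hnb hm.le (norm_nonneg _)
    have h6 := mul_le_mul_of_nonneg_right h5 (sq_nonneg s)
    rw [h1]
    nlinarith [sq_nonneg (‖a‖ - ‖b‖)]
  rw [h3] at hab
  have h7 : (1 + ε/8) * t ≤ (1 - ε/8) * (1 + ε/2) * t :=
    mul_le_mul_of_nonneg_right (by nlinarith) ht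
  refine le_of_mul_le_mul_left ?_ hm
  linarith
end

section
/- Let ε be a real number with 0 < ε ≤ 1/4. Let y, y' be unit vectors in a real inner product space and let a, b be nonzero vectors (in a possibly different real inner product space) with ‖a‖ = ‖b‖ ≤ 1 + ε/8 and ‖a − b‖ ≥ (1 − ε/8)·‖y − y'‖. Then sin(∠(a, b)/2) ≥ (1 − ε/2)·sin(∠(y, y')/2). -/
open InnerProductGeometry

theorem norm_sub_eq_two_mul_sin_half {V : Type*} [NormedAddCommGroup V] [InnerProductSpace ℝ V]
    (x y : V) (h : ‖x‖ = ‖y‖) :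
    0 ≤ Real.sin (InnerProductGeometry.angle x y / 2) ∧
      ‖x - y‖ = 2 * ‖x‖ * Real.sin (InnerProductGeometry.angle x y / 2) := by
  have h0 := InnerProductGeometry.angle_nonneg x y
  have h1 := InnerProductGeometry.angle_le_pi x y
  have hs : 0 ≤ Real.sin (InnerProductGeometry.angle x y / 2) :=
    Real.sin_nonneg_of_nonneg_of_le_pi (by linarith) (by linarith)
  refine ⟨hs, ?_⟩
  have hc := InnerProductGeometry.norm_sub_sq_eq_norm_sq_add_norm_sq_sub_two_mul_norm_mul_norm_mul_cos_angle x y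
  have h2 : Real.cos (InnerProductGeometry.angle x y)
      = 1 - 2 * Real.sin (InnerProductGeometry.angle x y / 2) ^ 2 := by
    have h3 := Real.cos_two_mul (InnerProductGeometry.angle x y / 2)
    rw [mul_div_cancel₀ _ (two_ne_zero)] at h3
    have h4 := Real.sin_sq_add_cos_sq (InnerProductGeometry.angle x y / 2)
    linarith
  rw [h2, ← h] at hc
  rw [← sq_eq_sq₀ (norm_nonneg _) (by positivity)]
  linear_combination hc

theorem sin_half_angle_lower_bound
    {E F : Type*} [NormedAddCommGroup E] [InnerProductSpace ℝ E]
    [NormedAddCommGroup F] [InnerProductSpace ℝ F]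
    (ε : ℝ) (hε0 : 0 < ε) (hε : ε ≤ 1/4)
    (y y' : E) (hy : ‖y‖ = 1) (hy' : ‖y'‖ = 1)
    (a b : F) (ha : a ≠ 0) (hb : b ≠ 0)
    (hnab : ‖a‖ = ‖b‖) (hna : ‖a‖ ≤ 1 + ε/8)
    (hab : ‖a - b‖ ≥ (1 - ε/8) * ‖y - y'‖) :
    Real.sin (angle a b / 2) ≥ (1 - ε/2) * Real.sin (angle y y' / 2) := by
  obtain ⟨hs, h1⟩ := norm_sub_eq_two_mul_sin_half a b hnab
  obtain ⟨ht, h2⟩ := norm_sub_eq_two_mul_sin_half y y' (hy.trans hy'.symm)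
  rw [h1, h2, hy] at hab
  set s := Real.sin (angle a b / 2)
  set t := Real.sin (angle y y' / 2)
  have h3 : ‖a‖ * s ≤ (1 + ε/8) * s := mul_le_mul_of_nonneg_right hna hs
  have h4 : (1 - ε/2) * (1 + ε/8) * t ≤ (1 - ε/8) * t :=
    mul_le_mul_of_nonneg_right (by nlinarith) ht
  have h5 : (1 + ε/8) * ((1 - ε/2) * t) ≤ (1 + ε/8) * s := by linarith
  exact le_of_mul_le_mul_left h5 (by linarith)
end

section
/- Let ε be a real number with 0 < ε ≤ 1/4. Let y, y' be unit vectors in a real inner product space with ‖y − y'‖ ≤ 1/2, and let a, b be nonzero vectors (in a possibly different real inner product space) with ‖a‖ = ‖b‖, 1 − ε/8 ≤ ‖a‖ ≤ 1 + ε/8, and (1 − ε/8)·‖y − y'‖ ≤ ‖a − b‖ ≤ (1 + ε/8)·‖y − y'‖. Then (1 − ε)·∠(y, y') ≤ ∠(a, b) ≤ (1 + ε)·∠(y, y'). -/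
open InnerProductGeometry

lemma aux_sin {x z : ℝ} (hx : 0 ≤ x) (hxz : x ≤ z) (hz : z ≤ Real.pi / 2)
    (hs : Real.sin z ≤ 1 / 2) : 1 / 2 * (z - x) ≤ Real.sin z - Real.sin x := by
  have hpi := Real.pi_pos
  have hz6 : z ≤ Real.pi / 6 := by
    by_contra! h
    have := Real.sin_lt_sin_of_lt_of_le_pi_div_two (by linarith) hz h
    rw [Real.sin_pi_div_six] at this
    linarith
  refine (convex_Icc 0 (Real.pi / 6)).mul_sub_le_image_sub_of_le_deriv
    Real.continuous_sin.continuousOn Real.differentiable_sin.differentiableOn ?_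
    x ⟨hx, by linarith⟩ z ⟨by linarith, hz6⟩ hxz
  intro w hw
  rw [interior_Icc] at hw
  rw [Real.deriv_sin, ← Real.cos_pi_div_three]
  exact Real.cos_le_cos_of_nonneg_of_le_pi hw.1.le (by linarith) (by linarith [hw.2])

lemma aux_chord {E : Type*} [NormedAddCommGroup E] [InnerProductSpace ℝ E] (a b : E)
    (h : ‖a‖ = ‖b‖) : ‖a - b‖ = 2 * ‖a‖ * Real.sin (angle a b / 2) := by
  have h1 := angle_nonneg a b
  have h2 := angle_le_pi a b
  have hs : 0 ≤ Real.sin (angle a b / 2) :=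
    Real.sin_nonneg_of_nonneg_of_le_pi (by linarith) (by linarith)
  have h3 := norm_sub_sq_real a b
  have h4 := cos_angle_mul_norm_mul_norm a b
  have h5 : Real.cos (angle a b) = 1 - 2 * Real.sin (angle a b / 2) ^ 2 := by
    have := Real.cos_two_mul' (angle a b / 2)
    have h6 := Real.sin_sq_add_cos_sq (angle a b / 2)
    rw [mul_div_cancel₀ _ (two_ne_zero)] at this
    linarith
  rw [← h4, h5, ← h] at h3
  have : ‖a - b‖ ^ 2 = (2 * ‖a‖ * Real.sin (angle a b / 2)) ^ 2 := by rw [h3]; ring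
  exact (sq_eq_sq₀ (norm_nonneg _) (by positivity)).1 this

theorem short_case_angle_distortion
    {E F : Type*} [NormedAddCommGroup E] [InnerProductSpace ℝ E]
    [NormedAddCommGroup F] [InnerProductSpace ℝ F]
    (ε : ℝ) (hε0 : 0 < ε) (hε : ε ≤ 1/4)
    (y y' : E) (hy : ‖y‖ = 1) (hy' : ‖y'‖ = 1) (hyy' : ‖y - y'‖ ≤ 1/2)
    (a b : F) (ha : a ≠ 0) (hb : b ≠ 0)
    (hnab : ‖a‖ = ‖b‖) (hlo : 1 - ε/8 ≤ ‖a‖) (hhi : ‖a‖ ≤ 1 + ε/8)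
    (hab_lo : (1 - ε/8) * ‖y - y'‖ ≤ ‖a - b‖)
    (hab_hi : ‖a - b‖ ≤ (1 + ε/8) * ‖y - y'‖) :
    (1 - ε) * angle y y' ≤ angle a b ∧ angle a b ≤ (1 + ε) * angle y y' := by
  have e1 := aux_chord y y' (hy.trans hy'.symm)
  have e2 := aux_chord a b hnab
  rw [hy] at e1
  rw [e2, e1] at hab_lo hab_hi
  rw [e1] at hyy'
  have hA0 := angle_nonneg y y'
  have hA1 := angle_le_pi y y'
  have hB0 := angle_nonneg a b
  have hB1 := angle_le_pi a b
  generalize angle y y' = A at *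
  generalize angle a b = B at *
  generalize ‖a‖ = r at *
  have hsA : 0 ≤ Real.sin (A / 2) :=
    Real.sin_nonneg_of_nonneg_of_le_pi (by linarith) (by linarith)
  have hsB : 0 ≤ Real.sin (B / 2) :=
    Real.sin_nonneg_of_nonneg_of_le_pi (by linarith) (by linarith)
  have hle : Real.sin (A / 2) ≤ A / 2 := Real.sin_le (by linarith)
  have k1 : (1 - ε/8) * Real.sin (A / 2) ≤ (1 + ε/8) * Real.sin (B / 2) := by
    nlinarith [mul_le_mul_of_nonneg_right hhi hsB]
  have k2 : (1 - ε/8) * Real.sin (B / 2) ≤ (1 + ε/8) * Real.sin (A / 2) := by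
    nlinarith [mul_le_mul_of_nonneg_right hlo hsB]
  have aux := @aux_sin (A/2) (B/2) (by linarith)
  have aux' := @aux_sin (B/2) (A/2) (by linarith)
  generalize Real.sin (A / 2) = s at *
  generalize Real.sin (B / 2) = t at *
  have m1 : s - t ≤ ε / 2 * s := by
    by_contra! h
    nlinarith [mul_nonneg hε0.le hsA, mul_nonneg (mul_nonneg hε0.le hsA) hε0.le]
  have m2 : t - s ≤ ε / 2 * s := by
    by_contra! h
    nlinarith [mul_nonneg hε0.le hsA, mul_nonneg (mul_nonneg hε0.le hsA) (sub_nonneg.2 hε)]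
  have m3 : ε * s ≤ ε * (A / 2) := mul_le_mul_of_nonneg_left hle hε0.le
  have m4 : 0 ≤ ε * A := by positivity
  have m5 : ε * s ≤ 1 / 4 * s := mul_le_mul_of_nonneg_right hε hsA
  rcases le_total A B with h | h
  · have := aux (by linarith) (by linarith) (by linarith)
    constructor <;> linarith
  · have := aux' (by linarith) (by linarith) (by linarith)
    constructor <;> linarith
end

section
/- Let α be a type, let f : α → α → ℝ satisfy f(x, y) = f(y, x) and f(x, x) = 0 for all x, y, let Err : ℝ → ℝ be any function, let n be a natural number, let d : Fin n → Fin n → ℝ satisfy d(j, k) = d(k, j) for all j, k and d(i, i) = 0, let X : Fin n → α be a configuration of points, let i : Fin n, let x' : α, and let X' = Function.update X i x' be the configuration obtained by replacing the i-th point of X by x'. If ∑_{j} Err(f(x', X'(j)) − d(i, j)) < ∑_{j} Err(f(X(i), X(j)) − d(i, j)), then ∑_{j} ∑_{k} Err(f(X'(j), X'(k)) − d(j, k)) < ∑_{j} ∑_{k} Err(f(X(j), X(k)) − d(j, k)). -/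
theorem placecenter_cost_decrease
    {α : Type*} (f : α → α → ℝ)
    (hf_symm : ∀ x y, f x y = f y x) (hf_self : ∀ x, f x x = 0)
    (Err : ℝ → ℝ) (n : ℕ)
    (d : Fin n → Fin n → ℝ)
    (hd_symm : ∀ j k, d j k = d k j) (hd_self : ∀ i, d i i = 0)
    (X : Fin n → α) (i : Fin n) (x' : α)
    (X' : Fin n → α) (hX' : X' = Function.update X i x')
    (h : ∑ j, Err (f x' (X' j) - d i j) < ∑ j, Err (f (X i) (X j) - d i j)) :
    ∑ j, ∑ k, Err (f (X' j) (X' k) - d j k)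
      < ∑ j, ∑ k, Err (f (X j) (X k) - d j k) := by 
  have hi : X' i = x' := by simp [hX']
  have hne : ∀ j, j ≠ i → X' j = X j := fun j hj => by simp [hX', hj]
  have key : ∀ j k, Err (f (X' j) (X' k) - d j k) - Err (f (X j) (X k) - d j k)
      = (if j = i then Err (f x' (X' k) - d i k) - Err (f (X i) (X k) - d i k) else 0)
      + (if k = i then Err (f x' (X' j) - d i j) - Err (f (X i) (X j) - d i j) else 0) := by
    intro j k
    by_cases hj : j = i
    · by_cases hk : k = i
      · subst hj
        subst hk
        simp [← hi, hf_self]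
      · subst hj
        simp [hk, hi]
    · by_cases hk : k = i
      · subst hk
        simp only [hj, if_false, if_true, zero_add, hi]
        rw [hf_symm (X' j), hf_symm (X j), hd_symm j]
      · simp [hj, hk, hne]
  have hsum := Finset.sum_congr (rfl : (Finset.univ : Finset (Fin n)) = Finset.univ)
    (fun j _ => Finset.sum_congr (rfl : (Finset.univ : Finset (Fin n)) = Finset.univ)
      (fun k _ => key j k))
  rw [Finset.sum_congr rfl (fun j _ => Finset.sum_add_distrib), Finset.sum_add_distrib,
    Finset.sum_comm] at hsum
  rw [Finset.sum_comm] at hsum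
  have e1 : ∑ j, ∑ k, (if j = i then Err (f x' (X' k) - d i k)
      - Err (f (X i) (X k) - d i k) else 0)
      = ∑ k, (Err (f x' (X' k) - d i k) - Err (f (X i) (X k) - d i k)) := by
    rw [Finset.sum_comm]
    simp
  have e2 : ∑ j, ∑ k, (if k = i then Err (f x' (X' j) - d i j)
      - Err (f (X i) (X j) - d i j) else 0)
      = ∑ k, (Err (f x' (X' k) - d i k) - Err (f (X i) (X k) - d i k)) := by
    simp
  rw [e1, e2] at hsum
  simp only [Finset.sum_sub_distrib] at hsum
  linarith
end

section
/- Let E be a real normed vector space, let n be a natural number, let x_1, …, x_n ∈ E, let r_1, …, r_n be nonnegative reals, and let Err : ℝ → ℝ be monotone nondecreasing on [0, ∞). Let x, x' ∈ E satisfy x ≠ x_j for all j, and define x̂_j = x_j + (r_j/‖x − x_j‖)·(x − x_j). If ∑_{j=1}^n Err(‖x' − x̂_j‖) ≤ ∑_{j=1}^n Err(‖x − x̂_j‖), then ∑_{j=1}^n Err(|‖x' − x_j‖ − r_j|) ≤ ∑_{j=1}^n Err(|‖x − x_j‖ − r_j|). -/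
theorem place_cost_decrease
    {E : Type*} [NormedAddCommGroup E] [NormedSpace ℝ E]
    (n : ℕ) (xs : Fin n → E) (r : Fin n → ℝ) (hr : ∀ j, 0 ≤ r j)
    (Err : ℝ → ℝ) (hErr : MonotoneOn Err (Set.Ici (0:ℝ)))
    (x x' : E) (hx : ∀ j, x ≠ xs j)
    (xhat : Fin n → E)
    (hxhat : ∀ j, xhat j = xs j + (r j / ‖x - xs j‖) • (x - xs j))
    (h : ∑ j, Err ‖x' - xhat j‖ ≤ ∑ j, Err ‖x - xhat j‖) :
    ∑ j, Err |‖x' - xs j‖ - r j| ≤ ∑ j, Err |‖x - xs j‖ - r j| := by 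
  have key : ∀ j, ‖xhat j - xs j‖ = r j := by
    intro j
    have hp : 0 < ‖x - xs j‖ := norm_pos_iff.mpr (sub_ne_zero.mpr (hx j))
    rw [hxhat j, add_sub_cancel_left, norm_smul, Real.norm_eq_abs,
      abs_of_nonneg (div_nonneg (hr j) hp.le), div_mul_cancel₀ _ hp.ne']
  have heq : ∀ j, ‖x - xhat j‖ = |‖x - xs j‖ - r j| := by
    intro j
    have hp : 0 < ‖x - xs j‖ := norm_pos_iff.mpr (sub_ne_zero.mpr (hx j))
    have h1 : x - xhat j = (1 - r j / ‖x - xs j‖) • (x - xs j) := by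
      rw [hxhat j, sub_smul, one_smul]; abel
    have h2 : ‖x - xs j‖ - r j = (1 - r j / ‖x - xs j‖) * ‖x - xs j‖ := by
      rw [sub_mul, one_mul, div_mul_cancel₀ _ hp.ne']
    rw [h1, norm_smul, Real.norm_eq_abs, h2, abs_mul, abs_norm]
  calc ∑ j, Err |‖x' - xs j‖ - r j| ≤ ∑ j, Err ‖x' - xhat j‖ := by
        refine Finset.sum_le_sum fun j _ => hErr (Set.mem_Ici.mpr (abs_nonneg _)) (Set.mem_Ici.mpr (norm_nonneg _)) ?_
        have h3 := abs_norm_sub_norm_le (x' - xs j) (xhat j - xs j)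
        rwa [key j, sub_sub_sub_cancel_right] at h3
    _ ≤ ∑ j, Err ‖x - xhat j‖ := h
    _ = _ := by simp only [heq]
end

section
/- There exists an absolute constant C > 0 with the following property. For every real ε with 0 < ε ≤ 1/4, every natural number d, every finite set Y of n ≥ 2 unit vectors in ℝ^{d+1}, and every natural number k with k ≥ C·(1/ε²)·log n, there exists a linear map T : ℝ^{d+1} → ℝ^{k+1} such that T(y) ≠ 0 for all y ∈ Y and, for all y, y' ∈ Y, (1 − ε)·∠(y, y') ≤ ∠(T(y), T(y')) ≤ (1 + ε)·∠(y, y'). Equivalently, mapping each y ∈ Y to the unit vector T(y)/‖T(y)‖ on the sphere S^k embeds Y into S^k so that every pairwise geodesic distance is preserved up to a multiplicative factor of (1 ± ε). -/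
open InnerProductGeometry

lemma aux_exp (x : ℝ) (hx : |x| ≤ 1/3) : 1 ≤ (1 - x) * Real.exp (x + x^2) := by
  rw [abs_le] at hx
  rcases le_total 0 x with h | h
  · have h1 := Real.quadratic_le_exp_of_nonneg (x := x + x^2) (by positivity)
    have h2 : 1 + x + 3 / 2 * x^2 ≤ Real.exp (x + x^2) := by
      refine le_trans ?_ h1
      nlinarith [pow_nonneg h 3, pow_nonneg h 4]
    nlinarith [mul_le_mul_of_nonneg_left h2 (by linarith : (0:ℝ) ≤ 1 - x), sq_nonneg x,
      mul_nonneg (sq_nonneg x) (by linarith : (0:ℝ) ≤ 1/3 - x)]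
  · have h1 := Real.add_one_le_exp (x + x^2)
    nlinarith [mul_le_mul_of_nonneg_left h1 (by linarith : (0:ℝ) ≤ 1 - x),
      mul_nonneg (sq_nonneg x) (by linarith : (0:ℝ) ≤ -x)]

lemma aux_sin_s16 (κ s : ℝ) (hκ : 1 ≤ κ) (hs : 0 ≤ s) (h : κ * s ≤ Real.pi / 2) :
    κ * (Real.sin s * Real.cos (κ * s)) ≤ Real.sin (κ * s) * Real.cos s := by
  have hκ0 : 0 < κ := by linarith
  let f : ℝ → ℝ := fun t => Real.sin (κ * t) * Real.cos t - κ * (Real.sin t * Real.cos (κ * t))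
  have hd : ∀ t, HasDerivAt f ((κ^2 - 1) * (Real.sin t * Real.sin (κ * t))) t := by
    intro t
    have hm : HasDerivAt (fun t : ℝ => κ * t) κ t := by
      simpa using (hasDerivAt_id t).const_mul κ
    have := (hm.sin.mul (Real.hasDerivAt_cos t)).sub
      (((Real.hasDerivAt_sin t).mul hm.cos).const_mul κ)
    refine this.congr_deriv ?_
    ring
  have hm : MonotoneOn f (Set.Icc 0 s) := by
    apply monotoneOn_of_deriv_nonneg (convex_Icc _ _)
    · exact fun t _ => (hd t).continuousAt.continuousWithinAt
    · exact fun t _ => (hd t).differentiableAt.differentiableWithinAt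
    · intro t ht
      rw [interior_Icc] at ht
      rw [(hd t).deriv]
      have h1 : κ * t ≤ κ * s := by gcongr; exact ht.2.le
      have h2 : t ≤ κ * t := by nlinarith [ht.1]
      have hp := Real.pi_pos
      have := Real.sin_nonneg_of_nonneg_of_le_pi ht.1.le (by linarith)
      have := Real.sin_nonneg_of_nonneg_of_le_pi (x := κ * t) (by linarith [ht.1]) (by linarith)
      have : 0 ≤ κ^2 - 1 := by nlinarith
      positivity
  have := hm (Set.left_mem_Icc.2 hs) (Set.right_mem_Icc.2 hs) hs
  simp [f] at this
  linarith

lemma aux_angle (κ a b : ℝ) (hκ : 1 ≤ κ) (ha : 0 ≤ a) (ha' : a ≤ Real.pi) (hb : 0 ≤ b)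
    (hb' : b ≤ Real.pi)
    (h : (1 - Real.cos b) * (1 + Real.cos a) ≤ κ^2 * ((1 - Real.cos a) * (1 + Real.cos b))) :
    b ≤ κ * a := by
  by_contra hc
  push Not at hc
  have hp := Real.pi_pos
  obtain ⟨s, rfl⟩ : ∃ s, a = 2 * s := ⟨a/2, by ring⟩
  obtain ⟨t, rfl⟩ : ∃ s, b = 2 * s := ⟨b/2, by ring⟩
  have hst : κ * s < t := by linarith
  have hss : s ≤ κ * s := by nlinarith
  have h0 : 0 ≤ Real.sin s := Real.sin_nonneg_of_nonneg_of_le_pi (by linarith) (by linarith)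
  have h1 : 0 ≤ Real.sin t := Real.sin_nonneg_of_nonneg_of_le_pi (by linarith) (by linarith)
  have h2 : 0 < Real.cos s := Real.cos_pos_of_mem_Ioo ⟨by linarith, by linarith⟩
  have h3 : 0 ≤ Real.cos t := Real.cos_nonneg_of_neg_pi_div_two_le_of_le (by linarith) (by linarith)
  have h4 : 0 < Real.cos (κ * s) := Real.cos_pos_of_mem_Ioo ⟨by linarith, by linarith⟩
  have h5 : 0 < Real.sin (t - κ * s) := Real.sin_pos_of_pos_of_lt_pi (by linarith) (by linarith)
  rw [Real.sin_sub] at h5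
  have h6 := aux_sin_s16 κ s hκ (by linarith) (by linarith)
  have h7 : Real.sin t * Real.cos s ≤ κ * (Real.sin s * Real.cos t) := by
    apply le_of_sq_le_sq _ (by positivity)
    simp only [Real.cos_two_mul] at h
    have e1 := Real.sin_sq_add_cos_sq s
    have e2 := Real.sin_sq_add_cos_sq t
    have e1' : Real.cos s^2 = 1 - Real.sin s^2 := by linarith
    have e2' : Real.cos t^2 = 1 - Real.sin t^2 := by linarith
    have : (Real.sin t^2) * Real.cos s^2 ≤ κ^2 * (Real.sin s^2 * Real.cos t^2) := by
      rw [e1', e2'] at h ⊢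
      linarith
    calc _ = _ := mul_pow _ _ 2
      _ ≤ _ := this
      _ = _ := by ring
  -- sin t cos κs cos s > cos t sin κs cos s ≥ κ cos t sin s cos κs
  nlinarith [mul_lt_mul_of_pos_right h5 h2, mul_le_mul_of_nonneg_right h7 h4.le,
    mul_le_mul_of_nonneg_left h6 h3]

open MeasureTheory ProbabilityTheory

lemma gauss_int (t : ℝ) (ht : |t| ≤ 1/6) :
    Integrable (fun x : ℝ => Real.exp (t * (x^2 - 1))) (gaussianReal 0 1) ∧
    ∫ x, Real.exp (t * (x^2 - 1)) ∂(gaussianReal 0 1) ≤ Real.exp (2 * t^2) := by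
  have ht' := abs_le.1 ht
  have hb : 0 < 1/2 - t := by linarith
  have key : ∀ x : ℝ, gaussianPDFReal 0 1 x * Real.exp (t * (x^2 - 1)) =
      ((√(2 * Real.pi))⁻¹ * Real.exp (-t)) * Real.exp (-(1/2 - t) * x^2) := by
    intro x
    rw [gaussianPDFReal_def]
    simp only [NNReal.coe_one, mul_one, sub_zero]
    rw [mul_assoc, mul_assoc, ← Real.exp_add, ← Real.exp_add]
    congr 2; ring
  constructor
  · rw [gaussianReal_of_var_ne_zero _ one_ne_zero, 
      integrable_withDensity_iff_integrable_smul' (measurable_gaussianPDF _ _)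
        (by simp [gaussianPDF_lt_top])]
    simp only [toReal_gaussianPDF, smul_eq_mul, key]
    exact (integrable_exp_neg_mul_sq hb).const_mul _
  · rw [integral_gaussianReal_eq_integral_smul one_ne_zero]
    simp only [smul_eq_mul, key]
    rw [integral_const_mul, integral_gaussian]
    have hp := Real.pi_pos
    have h1 := aux_exp (2 * t) (by rw [abs_mul, abs_two]; linarith)
    apply le_of_sq_le_sq _ (by positivity)
    rw [mul_pow, mul_pow, inv_pow, Real.sq_sqrt (by positivity), Real.sq_sqrt (by positivity),
      ← Real.exp_nat_mul, ← Real.exp_nat_mul]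
    have : (2 * Real.pi)⁻¹ * Real.exp ((2:ℕ) * -t) * (Real.pi / (1/2 - t)) =
      Real.exp (-(2*t)) / (1 - 2*t) := by
      have : 1 - 2 * t ≠ 0 := by linarith
      have : 1/2 - t ≠ 0 := by linarith
      push_cast
      field_simp
    rw [this, div_le_iff₀ (by linarith)]
    have h2 := mul_le_mul_of_nonneg_right h1 (Real.exp_pos (-(2*t))).le
    rw [mul_assoc, ← Real.exp_add, one_mul] at h2
    refine h2.trans (le_of_eq ?_)
    rw [mul_comm]; congr 2; push_cast; ring

lemma gauss_vec {d : ℕ} (w : EuclideanSpace ℝ (Fin d)) (hw : ‖w‖ = 1) (t : ℝ) (ht : |t| ≤ 1/6) :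
    Integrable (fun g => Real.exp (t * ((inner ℝ w g)^2 - 1))) 
      (stdGaussian (EuclideanSpace ℝ (Fin d))) ∧
    ∫ g, Real.exp (t * ((inner ℝ w g)^2 - 1)) ∂(stdGaussian (EuclideanSpace ℝ (Fin d)))
      ≤ Real.exp (2 * t^2) := by
  have hmap : (stdGaussian (EuclideanSpace ℝ (Fin d))).map (innerSL ℝ w) = gaussianReal 0 1 := by
    rw [IsGaussian.map_eq_gaussianReal, integral_strongDual_stdGaussian, variance_dual_stdGaussian,
      innerSL_apply_norm, hw]
    simp
  have hm : AEMeasurable (innerSL ℝ w) (stdGaussian (EuclideanSpace ℝ (Fin d))) := by fun_prop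
  obtain ⟨h1, h2⟩ := gauss_int t ht
  rw [← hmap] at h1 h2
  rw [integral_map hm (by fun_prop)] at h2
  rw [integrable_map_measure (by fun_prop) hm] at h1
  exact ⟨h1, h2⟩

lemma gauss_mat {d m : ℕ} (w : EuclideanSpace ℝ (Fin d)) (hw : ‖w‖ = 1) (t : ℝ) (ht : |t| ≤ 1/6) :
    Integrable (fun G : Fin m → EuclideanSpace ℝ (Fin d) => 
        ∏ i, Real.exp (t * ((inner ℝ w (G i))^2 - 1)))
      (Measure.pi fun _ => stdGaussian (EuclideanSpace ℝ (Fin d))) ∧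
    ∫ G : Fin m → EuclideanSpace ℝ (Fin d), ∏ i, Real.exp (t * ((inner ℝ w (G i))^2 - 1)) 
      ∂(Measure.pi fun _ => stdGaussian (EuclideanSpace ℝ (Fin d)))
      ≤ Real.exp (m * (2 * t^2)) := by
  obtain ⟨h1, h2⟩ := gauss_vec w hw t ht
  constructor
  · exact Integrable.fintype_prod (f := fun _ g => Real.exp (t * ((inner ℝ w g)^2 - 1))) (fun _ => h1)
  · rw [integral_fintype_prod_eq_prod (f := fun _ g => Real.exp (t * ((inner ℝ w g)^2 - 1)))]
    simp only [Finset.prod_const, Finset.card_univ, Fintype.card_fin]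
    rw [Real.exp_nat_mul]
    exact pow_le_pow_left₀ (integral_nonneg fun _ => (Real.exp_pos _).le) h2 _

lemma jl_norm {d m : ℕ} (hm : 0 < m) (W : Finset (EuclideanSpace ℝ (Fin (d+1)))) (η : ℝ)
    (h0 : 0 < η) (h1 : η ≤ 1/2) (hW : 2 * W.card * Real.exp (-(m * η^2 / 8)) < 1) :
    ∃ T : EuclideanSpace ℝ (Fin (d + 1)) →ₗ[ℝ] EuclideanSpace ℝ (Fin m),
      ∀ w ∈ W, (1 - η) * ‖w‖^2 ≤ ‖T w‖^2 ∧ ‖T w‖^2 ≤ (1 + η) * ‖w‖^2 := by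
  have hu : ∀ w : EuclideanSpace ℝ (Fin (d+1)), ∃ u : EuclideanSpace ℝ (Fin (d+1)),
      ‖u‖ = 1 ∧ w = ‖w‖ • u := by
    intro w
    by_cases hw : w = 0
    · exact ⟨EuclideanSpace.single 0 1, by simp, by simp [hw]⟩
    · have : ‖w‖ ≠ 0 := norm_ne_zero_iff.2 hw
      exact ⟨‖w‖⁻¹ • w, by simp [norm_smul, this], by rw [smul_smul]; simp [this]⟩
  choose u hu1 hu2 using hu
  set t := η / 4 with ht
  have hta : |t| ≤ 1/6 := by rw [abs_of_pos (by positivity)]; linarith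
  have hta' : |-t| ≤ 1/6 := by rwa [abs_neg]
  let μ : Measure (Fin m → EuclideanSpace ℝ (Fin (d+1))) :=
    Measure.pi fun _ => stdGaussian (EuclideanSpace ℝ (Fin (d+1)))
  let P : ℝ → EuclideanSpace ℝ (Fin (d+1)) → (Fin m → EuclideanSpace ℝ (Fin (d+1))) → ℝ :=
    fun t w G => ∏ i, Real.exp (t * ((inner ℝ w (G i))^2 - 1))
  let c := Real.exp (-(m * t * η))
  have hI : ∀ w ∈ W, Integrable (fun G => c * P t (u w) G + c * P (-t) (u w) G) μ := fun w _ =>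
    ((gauss_mat (u w) (hu1 w) t hta).1.const_mul c).add
      ((gauss_mat (u w) (hu1 w) (-t) hta').1.const_mul c)
  have hle : ∀ w ∈ W, ∫ G, (c * P t (u w) G + c * P (-t) (u w) G) ∂μ ≤
      2 * Real.exp (-(m * η^2 / 8)) := by
    intro w _
    rw [integral_add ((gauss_mat (u w) (hu1 w) t hta).1.const_mul c)
      ((gauss_mat (u w) (hu1 w) (-t) hta').1.const_mul c), integral_const_mul, integral_const_mul]
    have e : c * Real.exp (m * (2 * t^2)) = Real.exp (-(m * η^2 / 8)) := by
      simp only [c]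
      rw [← Real.exp_add, ht]; congr 1; ring
    have a1 := mul_le_mul_of_nonneg_left (gauss_mat (m := m) (u w) (hu1 w) t hta).2
      (Real.exp_pos (-(m * t * η))).le
    have a2 := mul_le_mul_of_nonneg_left (gauss_mat (m := m) (u w) (hu1 w) (-t) hta').2
      (Real.exp_pos (-(m * t * η))).le
    rw [neg_sq] at a2
    rw [two_mul, ← e]
    exact add_le_add a1 a2
  obtain ⟨G, hG⟩ := exists_le_integral (integrable_finsetSum W hI)
  rw [integral_finsetSum W hI] at hG
  have hG1 : ∑ w ∈ W, (c * P t (u w) G + c * P (-t) (u w) G) < 1 := by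
    refine hG.trans_lt ((Finset.sum_le_sum hle).trans_lt ?_)
    rw [Finset.sum_const, nsmul_eq_mul]
    linarith
  have hpos : ∀ s w, 0 < c * P s w G := fun s w =>
    mul_pos (Real.exp_pos _) (Finset.prod_pos fun i _ => Real.exp_pos _)
  have hterm : ∀ w ∈ W, c * P t (u w) G + c * P (-t) (u w) G < 1 := fun w hw =>
    (Finset.single_le_sum (f := fun w => c * P t (u w) G + c * P (-t) (u w) G)
      (fun v _ => (add_pos (hpos _ _) (hpos _ _)).le) hw).trans_lt hG1
  have hP : ∀ s w, c * P s w G = Real.exp (s * (∑ i, (inner ℝ w (G i))^2 - m) - m * t * η) := by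
    intro s w
    simp only [c, P]
    rw [← Real.exp_sum, ← Real.exp_add, ← Finset.mul_sum, Finset.sum_sub_distrib]
    congr 1; simp; ring
  have hm' : (0:ℝ) < m := by exact_mod_cast hm
  let T : EuclideanSpace ℝ (Fin (d + 1)) →ₗ[ℝ] EuclideanSpace ℝ (Fin m) :=
    { toFun := fun w => WithLp.toLp 2 (fun i => (√m)⁻¹ * inner ℝ w (G i))
      map_add' := by
        intro x y; ext i; simp [inner_add_left, mul_add]
      map_smul' := by
        intro a x; ext i; simp [inner_smul_left]; ring }
  have hT : ∀ w, ‖T w‖^2 = (m:ℝ)⁻¹ * ∑ i, (inner ℝ w (G i))^2 := by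
    intro w
    rw [EuclideanSpace.real_norm_sq_eq]
    simp only [T, LinearMap.coe_mk, AddHom.coe_mk, mul_pow, inv_pow, Real.sq_sqrt hm'.le]
    rw [Finset.mul_sum]
  refine ⟨T, fun w hw => ?_⟩
  have h3 := hterm w hw
  have h4 : c * P t (u w) G < 1 := by linarith [hpos (-t) (u w)]
  have h5 : c * P (-t) (u w) G < 1 := by linarith [hpos t (u w)]
  rw [hP, Real.exp_lt_one_iff] at h4 h5
  set S := ∑ i, (inner ℝ (u w) (G i))^2 with hS
  have ht0 : 0 < t := by positivity
  have h6 : S - m < m * η := by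
    by_contra hc; push Not at hc; nlinarith [mul_le_mul_of_nonneg_left hc ht0.le]
  have h7 : -(S - m) < m * η := by
    by_contra hc; push Not at hc; nlinarith [mul_le_mul_of_nonneg_left hc ht0.le]
  have hTu : ‖T w‖^2 = (S / m) * ‖w‖^2 := by
    conv_lhs => rw [hu2 w, map_smul, norm_smul, mul_pow, hT]
    simp; ring
  rw [hTu]
  constructor
  · gcongr
    rw [le_div_iff₀ hm']; linarith
  · gcongr
    rw [div_le_iff₀ hm']; linarith

lemma plane {E F : Type*} [NormedAddCommGroup E] [InnerProductSpace ℝ E] [NormedAddCommGroup F]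
    [InnerProductSpace ℝ F] (T : E →ₗ[ℝ] F) (η : ℝ) (e f : E) (he : ‖e‖ = 1) (hf : ‖f‖ = 1)
    (hef : inner ℝ e f = 0)
    (H : ∀ w, w = e ∨ w = f ∨ w = e + f ∨ w = e - f →
      (1 - η) * ‖w‖^2 ≤ ‖T w‖^2 ∧ ‖T w‖^2 ≤ (1 + η) * ‖w‖^2) (a b : ℝ) :
    (1 - 2 * η) * ‖a • e + b • f‖^2 ≤ ‖T (a • e + b • f)‖^2 ∧
    ‖T (a • e + b • f)‖^2 ≤ (1 + 2 * η) * ‖a • e + b • f‖^2 := by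
  have H1 := H e (by simp)
  have H2 := H f (by simp)
  have H3 := H (e + f) (by simp)
  have H4 := H (e - f) (by simp)
  simp only [map_add, map_sub, map_smul, norm_add_sq_real, norm_sub_sq_real, he, hf, hef, norm_smul,
    inner_smul_left, inner_smul_right, mul_pow, Real.norm_eq_abs, sq_abs] at H1 H2 H3 H4 ⊢
  simp only [conj_trivial]
  set A := ‖T e‖^2
  set B := ‖T f‖^2
  set D : ℝ := inner ℝ (T e) (T f)
  have hη : 0 ≤ η := by linarith
  have hD1 : D ≤ η := by linarith
  have hD2 : -η ≤ D := by linarith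
  constructor
  · nlinarith [mul_le_mul_of_nonneg_left H1.1 (sq_nonneg a),
      mul_le_mul_of_nonneg_left H2.1 (sq_nonneg b),
      mul_nonneg (sub_nonneg.2 hD1) (sq_nonneg (a - b)),
      mul_nonneg (sub_nonneg.2 hD2) (sq_nonneg (a + b))]
  · nlinarith [mul_le_mul_of_nonneg_left H1.2 (sq_nonneg a),
      mul_le_mul_of_nonneg_left H2.2 (sq_nonneg b),
      mul_nonneg (sub_nonneg.2 hD1) (sq_nonneg (a + b)),
      mul_nonneg (sub_nonneg.2 hD2) (sq_nonneg (a - b))]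

lemma cross (p q L U c c' κ : ℝ) (hp : 0 < p) (hq : 0 < q) (hL : 0 < L) (hU : U ≤ κ^2 * L)
    (hc : -1 ≤ c) (hc1 : c ≤ 1) (hc' : -1 ≤ c')
    (h1 : p^2 + q^2 - 2 * (p * q) * c' ≤ U * (2 - 2 * c))
    (h2 : L * (q^2 + p^2 + 2 * (p * q) * c) ≤ 2 * p^2 * q^2 * (1 + c')) :
    (1 - c') * (1 + c) ≤ κ^2 * ((1 - c) * (1 + c')) := by
  have a1 : p * q * (1 - c') ≤ U * (1 - c) := by nlinarith [sq_nonneg (p - q)]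
  have hpq : 0 < p * q := by positivity
  have a2 : L * (1 + c) ≤ p * q * (1 + c') := by
    have : (p * q) * (L * (1 + c)) ≤ (p * q) * (p * q * (1 + c')) := by
      nlinarith [mul_nonneg hL.le (sq_nonneg (p - q))]
    exact le_of_mul_le_mul_left this hpq
  have b1 := mul_le_mul_of_nonneg_right a1 (mul_nonneg hL.le (by linarith : 0 ≤ 1 + c))
  have hUc : 0 ≤ κ^2 * L * (1 - c) := mul_nonneg (by positivity) (by linarith)
  have b0 : U * (1 - c) ≤ κ^2 * L * (1 - c) := mul_le_mul_of_nonneg_right hU (by linarith)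
  have b3 := mul_le_mul_of_nonneg_right b0 (mul_nonneg hL.le (by linarith : 0 ≤ 1 + c))
  have b2 := mul_le_mul_of_nonneg_left a2 hUc
  have : (L * (p * q)) * ((1 - c') * (1 + c)) ≤ (L * (p * q)) * (κ^2 * ((1 - c) * (1 + c'))) := by
    linarith
  exact le_of_mul_le_mul_left this (by positivity)

lemma angle_pair {E F : Type*} [NormedAddCommGroup E] [InnerProductSpace ℝ E]
    [NormedAddCommGroup F] [InnerProductSpace ℝ F] (T : E →ₗ[ℝ] F) (L U κ : ℝ) (y z : E)
    (hy : ‖y‖ = 1) (hz : ‖z‖ = 1) (hL : 0 < L) (hU : U ≤ κ^2 * L) (hκ : 1 ≤ κ)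
    (H : ∀ a b : ℝ, L * ‖a • y + b • z‖^2 ≤ ‖T (a • y + b • z)‖^2 ∧
      ‖T (a • y + b • z)‖^2 ≤ U * ‖a • y + b • z‖^2) :
    angle (T y) (T z) ≤ κ * angle y z ∧ angle y z ≤ κ * angle (T y) (T z) := by
  have hp : 0 < ‖T y‖ := by
    have := (H 1 0).1
    simp [hy] at this
    by_contra hc
    have : ‖T y‖ = 0 := le_antisymm (not_lt.1 hc) (norm_nonneg _)
    simp_all
    linarith
  have hq : 0 < ‖T z‖ := by
    have := (H 0 1).1
    simp [hz] at this
    by_contra hc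
    have : ‖T z‖ = 0 := le_antisymm (not_lt.1 hc) (norm_nonneg _)
    simp_all
    linarith
  have e1 : inner ℝ y z = Real.cos (angle y z) := by rw [cos_angle, hy, hz]; simp
  have e2 : inner ℝ (T y) (T z) = ‖T y‖ * ‖T z‖ * Real.cos (angle (T y) (T z)) := by
    rw [cos_angle]; field_simp
  simp only [map_add, map_smul, norm_add_sq_real, hy, hz, norm_smul,
    inner_smul_left, inner_smul_right, mul_pow, Real.norm_eq_abs, sq_abs, conj_trivial, e1, e2] at H
  set p := ‖T y‖
  set q := ‖T z‖
  have c1 := Real.neg_one_le_cos (angle y z)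
  have c2 := Real.cos_le_one (angle y z)
  have c3 := Real.neg_one_le_cos (angle (T y) (T z))
  have c4 := Real.cos_le_one (angle (T y) (T z))
  have g1 := H 1 (-1)
  have g2 := H 1 1
  have g3 := H q p
  have g4 := H q (-p)
  have r1 := cross p q L U (Real.cos (angle y z)) (Real.cos (angle (T y) (T z))) κ hp hq hL hU
    c1 c2 c3 (by linarith) (by linarith)
  have r2 := cross p q L U (-Real.cos (angle y z)) (-Real.cos (angle (T y) (T z))) κ hp hq hL hU
    (by linarith) (by linarith) (by linarith) (by linarith) (by linarith)
  constructor
  · exact aux_angle _ _ _ hκ (angle_nonneg _ _) (angle_le_pi _ _) (angle_nonneg _ _)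
      (angle_le_pi _ _) r1
  · exact aux_angle _ _ _ hκ (angle_nonneg _ _) (angle_le_pi _ _) (angle_nonneg _ _)
      (angle_le_pi _ _) (by linarith)

lemma count (n m : ℕ) (N : ℕ) (ε : ℝ) (hε : 0 < ε) (hn : 2 ≤ n) (hN : N ≤ n + 4 * (n * n))
    (hm : 768 * (1 / ε^2) * Real.log n < m) :
    2 * (N:ℝ) * Real.exp (-(m * (ε/4)^2 / 8)) < 1 := by
  have hn' : (2:ℝ) ≤ n := by exact_mod_cast hn
  have h1 : (2:ℝ) * N ≤ n^6 := by
    have : (N:ℝ) ≤ n + 4 * (n * n) := by exact_mod_cast hN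
    have h2 : (16:ℝ) ≤ n^4 := by
      calc (16:ℝ) = 2^4 := by norm_num
        _ ≤ _ := by gcongr
    have h3 : (n:ℝ)^6 = n^4 * n^2 := by ring
    nlinarith [mul_le_mul_of_nonneg_right h2 (sq_nonneg (n:ℝ))]
  have h2 : 6 * Real.log n < m * (ε/4)^2 / 8 := by
    have := mul_lt_mul_of_pos_right hm (by positivity : 0 < ε^2 / 128)
    have e : 768 * (1 / ε^2) * Real.log n * (ε^2/128) = 6 * Real.log n := by
      field_simp; ring
    rw [e] at this
    linarith
  have h3 : (n:ℝ)^6 = Real.exp (6 * Real.log n) := by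
    rw [show (6:ℝ) = (6:ℕ) by norm_num, Real.exp_nat_mul, Real.exp_log (by linarith)]
  calc _ ≤ (n:ℝ)^6 * Real.exp (-(m * (ε/4)^2 / 8)) := by gcongr
    _ = Real.exp (6 * Real.log n + -(m * (ε/4)^2 / 8)) := by rw [h3, Real.exp_add]
    _ < 1 := by rw [Real.exp_lt_one_iff]; linarith

theorem spherical_johnson_lindenstrauss :
    ∃ C : ℝ, 0 < C ∧
      ∀ (ε : ℝ), 0 < ε → ε ≤ 1/4 →
      ∀ (d : ℕ) (Y : Finset (EuclideanSpace ℝ (Fin (d + 1)))),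
        (∀ y ∈ Y, ‖y‖ = 1) → 2 ≤ Y.card →
      ∀ (k : ℕ), C * (1 / ε ^ 2) * Real.log Y.card ≤ k →
      ∃ T : EuclideanSpace ℝ (Fin (d + 1)) →ₗ[ℝ] EuclideanSpace ℝ (Fin (k + 1)),
        (∀ y ∈ Y, T y ≠ 0) ∧
        ∀ y ∈ Y, ∀ y' ∈ Y,
          (1 - ε) * angle y y' ≤ angle (T y) (T y') ∧
          angle (T y) (T y') ≤ (1 + ε) * angle y y' := by
  classical
  refine ⟨768, by norm_num, ?_⟩
  intro ε hε hε4 d Y hY hcard k hk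
  let V := EuclideanSpace ℝ (Fin (d + 1))
  let e : V × V → V := fun x => ‖x.1 + x.2‖⁻¹ • (x.1 + x.2)
  let f : V × V → V := fun x => ‖x.1 - x.2‖⁻¹ • (x.1 - x.2)
  let Q := Y ×ˢ Y
  let W : Finset V := Y ∪ (Q.image e ∪ (Q.image f ∪
    (Q.image (fun x => e x + f x) ∪ Q.image (fun x => e x - f x))))
  have hQ : Q.card = Y.card * Y.card := Finset.card_product _ _
  have hW : W.card ≤ Y.card + 4 * (Y.card * Y.card) := by
    have b1 : (Q.image e).card ≤ Q.card := Finset.card_image_le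
    have b2 : (Q.image f).card ≤ Q.card := Finset.card_image_le
    have b3 : (Q.image (fun x => e x + f x)).card ≤ Q.card := Finset.card_image_le
    have b4 : (Q.image (fun x => e x - f x)).card ≤ Q.card := Finset.card_image_le
    have u1 := Finset.card_union_le (Q.image (fun x => e x + f x)) (Q.image (fun x => e x - f x))
    have u2 := Finset.card_union_le (Q.image f) (Q.image (fun x => e x + f x) ∪ Q.image (fun x => e x - f x))
    have u3 := Finset.card_union_le (Q.image e) (Q.image f ∪ (Q.image (fun x => e x + f x) ∪ Q.image (fun x => e x - f x)))
    have u4 : W.card ≤ _ := Finset.card_union_le Y _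
    omega
  obtain ⟨T, hT⟩ := jl_norm (m := k + 1) (Nat.succ_pos k) W (ε/4) (by positivity) (by linarith)
    (count Y.card (k+1) W.card ε hε hcard hW (by push_cast; linarith))
  have hT0 : ∀ y ∈ Y, T y ≠ 0 := by
    intro y hy h0
    have := (hT y (Finset.mem_union_left _ hy)).1
    rw [h0, hY y hy] at this
    simp at this
    linarith
  refine ⟨T, hT0, ?_⟩
  intro y hy z hz
  have ny := hY y hy
  have nz := hY z hz
  have y0 : y ≠ 0 := by rintro rfl; simp at ny
  by_cases h1 : y = z
  · subst h1
    rw [angle_self y0, angle_self (hT0 y hy)]; simp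
  by_cases h2 : z = -y
  · subst h2
    rw [map_neg, angle_self_neg_of_nonzero y0, angle_self_neg_of_nonzero (hT0 y hy)]
    constructor <;> nlinarith [Real.pi_pos]
  have hs : ‖y + z‖ ≠ 0 := by
    rw [norm_ne_zero_iff]; intro h; exact h2 (eq_neg_of_add_eq_zero_right h)
  have hd : ‖y - z‖ ≠ 0 := by
    rw [norm_ne_zero_iff]; exact sub_ne_zero.2 h1
  have hmem : (y, z) ∈ Q := Finset.mem_product.2 ⟨hy, hz⟩
  have hpl := plane T (ε/4) (e (y,z)) (f (y,z)) 
    (by change ‖‖y + z‖⁻¹ • (y + z)‖ = 1; rw [norm_smul, norm_inv, norm_norm, inv_mul_cancel₀ hs])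
    (by change ‖‖y - z‖⁻¹ • (y - z)‖ = 1; rw [norm_smul, norm_inv, norm_norm, inv_mul_cancel₀ hd])
    (by
      simp only [e, f, inner_smul_left, inner_smul_right]
      rw [(real_inner_add_sub_eq_zero_iff y z).2 (by rw [ny, nz])]; simp)
    (by
      intro w hw
      apply hT
      simp only [W, Finset.mem_union]
      rcases hw with rfl | rfl | rfl | rfl
      · exact Or.inr (Or.inl (Finset.mem_image_of_mem e hmem))
      · exact Or.inr (Or.inr (Or.inl (Finset.mem_image_of_mem f hmem)))
      · exact Or.inr (Or.inr (Or.inr (Or.inl (Finset.mem_image_of_mem (fun x => e x + f x) hmem))))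
      · exact Or.inr (Or.inr (Or.inr (Or.inr (Finset.mem_image_of_mem (fun x => e x - f x) hmem)))))
  obtain ⟨r1, r2⟩ := angle_pair T (1 - 2 * (ε/4)) (1 + 2 * (ε/4)) (1 + ε) y z ny nz (by linarith)
    (by nlinarith [mul_pos hε hε]) (by linarith) (by
      intro a b
      have : a • y + b • z = ((a + b) / 2 * ‖y + z‖) • e (y,z) + ((a - b) / 2 * ‖y - z‖) • f (y,z) := by
        simp only [e, f, smul_smul, mul_assoc, mul_inv_cancel₀ hs, mul_inv_cancel₀ hd]
        module
      rw [this]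
      exact hpl _ _)
  refine ⟨?_, r1⟩
  have := mul_le_mul_of_nonneg_left r2 (by linarith : 0 ≤ 1 - ε)
  nlinarith [angle_nonneg (T y) (T z), mul_nonneg (sq_nonneg ε) (angle_nonneg (T y) (T z))]
end
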